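/- Let ε, α₀, β₀, γ ∈ ℂ* and set α(l) = ε^l·α₀, β(m) = ε^m·β₀. Suppose F, G, H : ℤ × ℤ → ℂ* satisfy H(l,m) = α(l)²/(F(l,m)·G(l,m)), the l-direction system F(l+1,m)/G(l,m) = β(m)²·(1+H(l,m)+H(l,m)·F(l,m))/(1+F(l,m)+F(l,m)·G(l,m)), G(l+1,m)/H(l,m) = (1+F(l,m)+F(l,m)·G(l,m))/(γ²·(1+G(l,m)+G(l,m)·H(l,m))), H(l+1,m)/F(l,m) = ε²·γ²·(1+G(l,m)+G(l,m)·H(l,m))/(β(m)²·(1+H(l,m)+H(l,m)·F(l,m))), and the m-direction system F(l,m+1)·F(l,m) = α(l)²·β(m)²·γ²·(1+H(l,m+1))/(H(l,m+1)·(γ²+β(m)²·H(l,m+1))), H(l,m+1)·H(l,m) = α(l)²·γ²·(β(m)²+F(l,m))/(β(m)²·F(l,m)·(1+F(l,m))), for all l,m. Then u(l,m) := ε^(1/2)·γ·G(l,m)/α(l), where ε^(1/2) is a fixed square root of ε, satisfies ε·u(l+1,m+1) − u(l,m) = ε/u(l,m+1) − 1/u(l+1,m) for all l,m. -/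

import Mathlib

/-!
Write `a = α(l)²`, `b = β(m)²`, `c = γ²`. Let `f, g, h` be the values of `F, G, H` at `(l, m)` and
`f', g', h'` those at `(l, m + 1)`; let `gₗ, gₗ'` be the values of `G` at `(l + 1, m)` and
`(l + 1, m + 1)`. After rescaling, the discrete KdV equation reads
`c gₗ' - a / g' = c g - a / gₗ`. As `f g h = f' g' h' = a`, the `G`-component of the q-Painlevé IV
system turns the two sides into `(1 - a) h' / (1 + g' + g' h')` and
`(1 - a) c g / (1 + f + f g)`, and these two fractions agree by the q-Painlevé III system.
-/

section

variable {K : Type*} [Field K]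

theorem mul_eq_of_eq_div_of_ne_zero {x p q : K} (hx : x ≠ 0) (h : x = p / q) : x * q = p :=
  (eq_div_iff (div_ne_zero_iff.1 (h ▸ hx)).2).1 h

section qPIV

variable {a c f g h gₗ : K}

theorem qPIV_mul_next_sub_div (hfgh : h * (f * g) = a)
    (hstep : gₗ * (c * (1 + g + g * h)) = (1 + f + f * g) * h)
    (hg : g ≠ 0) (hden : 1 + g + g * h ≠ 0) :
    c * gₗ - a / g = (1 - a) * (h / (1 + g + g * h)) := by
  field_simp
  linear_combination g * hstep + (1 + g) * hfgh

theorem qPIV_mul_sub_div_next (hfgh : h * (f * g) = a)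
    (hstep : gₗ * (c * (1 + g + g * h)) = (1 + f + f * g) * h)
    (hgₗ : gₗ ≠ 0) (hden : 1 + f + f * g ≠ 0) :
    c * g - a / gₗ = (1 - a) * (c * g / (1 + f + f * g)) := by
  rw [← mul_div_assoc, eq_div_iff hden]
  field_simp
  linear_combination f * g * hstep + (1 + f + f * g - c * g * gₗ) * hfgh

end qPIV

section qPIII

variable {a b c f g h f' g' h' : K}

theorem qPIII_next_h (hf : f ≠ 0) (hh : h ≠ 0) (hfgh : h * (f * g) = a)
    (hstep : h' * h * (b * f * (1 + f)) = a * c * (b + f)) :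
    b * (1 + f) * h' = c * g * (b + f) := by
  apply mul_left_cancel₀ (mul_ne_zero hf hh)
  linear_combination hstep - c * (b + f) * hfgh

theorem qPIII_next_g (hf' : f' ≠ 0) (hh' : h' ≠ 0) (hfgh' : h' * (f' * g') = a)
    (hstep : f' * f * (h' * (c + b * h')) = a * b * c * (1 + h')) :
    b * c * (1 + h') * g' = f * (c + b * h') := by
  apply mul_left_cancel₀ (mul_ne_zero hf' hh')
  linear_combination b * c * (1 + h') * hfgh' - hstep

theorem qPIII_div_eq_div (hb : b ≠ 0)
    (hden : 1 + f + f * g ≠ 0) (hden' : 1 + g' + g' * h' ≠ 0)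
    (hnext_h : b * (1 + f) * h' = c * g * (b + f))
    (hnext_g : b * c * (1 + h') * g' = f * (c + b * h')) :
    h' / (1 + g' + g' * h') = c * g / (1 + f + f * g) := by
  rw [div_eq_div_iff hden' hden]
  apply mul_left_cancel₀ hb
  linear_combination hnext_h - g * hnext_g

end qPIII

theorem dKdV_of_rescaled {s γ α g gₗ g' gₗ' : K} (hs : s ≠ 0) (hγ : γ ≠ 0) (hα : α ≠ 0)
    (h : γ ^ 2 * gₗ' - α ^ 2 / g' = γ ^ 2 * g - α ^ 2 / gₗ) :
    s ^ 2 * (s * γ * gₗ' / (s ^ 2 * α)) - s * γ * g / α =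
      s ^ 2 / (s * γ * g' / α) - 1 / (s * γ * gₗ / (s ^ 2 * α)) := by
  have hscale : s / (γ * α) * (γ ^ 2 * gₗ' - α ^ 2 / g') =
      s / (γ * α) * (γ ^ 2 * g - α ^ 2 / gₗ) := by rw [h]
  field_simp at hscale ⊢
  linear_combination hscale

theorem stmt_4_general {ε γ s : K} (hγ : γ ≠ 0) (hs : s ^ 2 = ε) {α β : ℤ → K}
    (hα : ∀ l, α l ≠ 0) (hαs : ∀ l, α (l + 1) = ε * α l) (hβ : ∀ m, β m ≠ 0)
    {F G H : ℤ × ℤ → K}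
    (hF : ∀ l m : ℤ, F (l, m) ≠ 0) (hG : ∀ l m : ℤ, G (l, m) ≠ 0)
    (hFGH : ∀ l m : ℤ, H (l, m) = (α l) ^ 2 / (F (l, m) * G (l, m)))
    (hl2 : ∀ l m : ℤ,
      G (l + 1, m) / H (l, m)
        = (1 + F (l, m) + F (l, m) * G (l, m))
          / (γ ^ 2 * (1 + G (l, m) + G (l, m) * H (l, m))))
    (hm1 : ∀ l m : ℤ,
      F (l, m + 1) * F (l, m)
        = (α l) ^ 2 * (β m) ^ 2 * γ ^ 2 * (1 + H (l, m + 1))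
          / (H (l, m + 1) * (γ ^ 2 + (β m) ^ 2 * H (l, m + 1))))
    (hm2 : ∀ l m : ℤ,
      H (l, m + 1) * H (l, m)
        = (α l) ^ 2 * γ ^ 2 * ((β m) ^ 2 + F (l, m))
          / ((β m) ^ 2 * F (l, m) * (1 + F (l, m))))
    {u : ℤ × ℤ → K} (hu : ∀ l m : ℤ, u (l, m) = s * γ * G (l, m) / α l) (l m : ℤ) :
    ε * u (l + 1, m + 1) - u (l, m) = ε / u (l, m + 1) - 1 / u (l + 1, m) := by
  have hH (l m : ℤ) : H (l, m) ≠ 0 := by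
    rw [hFGH]
    exact div_ne_zero (pow_ne_zero 2 (hα l)) (mul_ne_zero (hF l m) (hG l m))
  have hprod (l m : ℤ) : H (l, m) * (F (l, m) * G (l, m)) = α l ^ 2 :=
    mul_eq_of_eq_div_of_ne_zero (hH l m) (hFGH l m)
  have hden (l m : ℤ) : 1 + F (l, m) + F (l, m) * G (l, m) ≠ 0 ∧
      γ ^ 2 * (1 + G (l, m) + G (l, m) * H (l, m)) ≠ 0 :=
    div_ne_zero_iff.1 (hl2 l m ▸ div_ne_zero (hG (l + 1) m) (hH l m))
  have hstep (l m : ℤ) := (div_eq_div_iff (hH l m) (hden l m).2).1 (hl2 l m)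
  have hdenG := right_ne_zero_of_mul (hden l (m + 1)).2
  have hnext_h := qPIII_next_h (hF l m) (hH l m) (hprod l m)
    (mul_eq_of_eq_div_of_ne_zero (mul_ne_zero (hH l (m + 1)) (hH l m)) (hm2 l m))
  have hnext_g := qPIII_next_g (hF l (m + 1)) (hH l (m + 1)) (hprod l (m + 1))
    (mul_eq_of_eq_div_of_ne_zero (mul_ne_zero (hF l (m + 1)) (hF l m)) (hm1 l m))
  have hrescaled : γ ^ 2 * G (l + 1, m + 1) - α l ^ 2 / G (l, m + 1) =
      γ ^ 2 * G (l, m) - α l ^ 2 / G (l + 1, m) := by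
    rw [qPIV_mul_next_sub_div (hprod l (m + 1)) (hstep l (m + 1)) (hG l (m + 1)) hdenG,
      qPIV_mul_sub_div_next (hprod l m) (hstep l m) (hG (l + 1) m) (hden l m).1,
      qPIII_div_eq_div (pow_ne_zero 2 (hβ m)) (hden l m).1 hdenG hnext_h hnext_g]
  have hs0 : s ≠ 0 := by
    rintro rfl
    exact hα (l + 1) (by simp [hαs, ← hs])
  simpa only [hu, hαs, ← hs] using dKdV_of_rescaled hs0 hγ (hα l) hrescaled

end

theorem stmt_4 (ε α₀ β₀ γ : ℂ) (hε : ε ≠ 0) (hα₀ : α₀ ≠ 0) (hβ₀ : β₀ ≠ 0) (hγ : γ ≠ 0)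
    (s : ℂ) (hs : s ^ 2 = ε)
    (α β : ℤ → ℂ) (hα : ∀ l : ℤ, α l = ε ^ l * α₀) (hβ : ∀ m : ℤ, β m = ε ^ m * β₀)
    (F G H : ℤ × ℤ → ℂ)
    (hF : ∀ l m : ℤ, F (l, m) ≠ 0) (hG : ∀ l m : ℤ, G (l, m) ≠ 0)
    (hH : ∀ l m : ℤ, H (l, m) ≠ 0)
    (hFGH : ∀ l m : ℤ, H (l, m) = (α l) ^ 2 / (F (l, m) * G (l, m)))
    (hden1 : ∀ l m : ℤ, 1 + F (l, m) + F (l, m) * G (l, m) ≠ 0)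
    (hden2 : ∀ l m : ℤ, 1 + G (l, m) + G (l, m) * H (l, m) ≠ 0)
    (hden3 : ∀ l m : ℤ, 1 + H (l, m) + H (l, m) * F (l, m) ≠ 0)
    (hden4 : ∀ l m : ℤ, γ ^ 2 + (β m) ^ 2 * H (l, m) ≠ 0)
    (hden5 : ∀ l m : ℤ, 1 + F (l, m) ≠ 0)
    (hl1 : ∀ l m : ℤ,
      F (l + 1, m) / G (l, m)
        = (β m) ^ 2 * (1 + H (l, m) + H (l, m) * F (l, m))
          / (1 + F (l, m) + F (l, m) * G (l, m)))
    (hl2 : ∀ l m : ℤ,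
      G (l + 1, m) / H (l, m)
        = (1 + F (l, m) + F (l, m) * G (l, m))
          / (γ ^ 2 * (1 + G (l, m) + G (l, m) * H (l, m))))
    (hl3 : ∀ l m : ℤ,
      H (l + 1, m) / F (l, m)
        = ε ^ 2 * γ ^ 2 * (1 + G (l, m) + G (l, m) * H (l, m))
          / ((β m) ^ 2 * (1 + H (l, m) + H (l, m) * F (l, m))))
    (hm1 : ∀ l m : ℤ,
      F (l, m + 1) * F (l, m)
        = (α l) ^ 2 * (β m) ^ 2 * γ ^ 2 * (1 + H (l, m + 1))
          / (H (l, m + 1) * (γ ^ 2 + (β m) ^ 2 * H (l, m + 1))))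
    (hm2 : ∀ l m : ℤ,
      H (l, m + 1) * H (l, m)
        = (α l) ^ 2 * γ ^ 2 * ((β m) ^ 2 + F (l, m))
          / ((β m) ^ 2 * F (l, m) * (1 + F (l, m))))
    (u : ℤ × ℤ → ℂ)
    (hu : ∀ l m : ℤ, u (l, m) = s * γ * G (l, m) / α l) :
    ∀ l m : ℤ,
      ε * u (l + 1, m + 1) - u (l, m) = ε / u (l, m + 1) - 1 / u (l + 1, m) := by
  exact stmt_4_general hγ hs (by simp [hα, hε, hα₀, zpow_ne_zero])
    (fun l => by rw [hα, hα, zpow_add_one₀ hε]; ring) (by simp [hβ, hε, hβ₀, zpow_ne_zero])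
    hF hG hFGH hl2 hm1 hm2 hu
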